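/- Let Q ⊂ ℝ² be a square of area A > 0 and fix w_max > 0, ρ > 0. For each m ≥ 1 define the optimal light-load coverage cost of m differential-drive robots as T_opt^DD(m) = inf over all configurations g₁,…,g_m ∈ ℝ² × ℝ of (1/A)∫_Q min_{1≤i≤m} τ_DD(g_i, q) dq. Then liminf_{m→∞} m^{1/3} · T_opt^DD(m) ≥ (1/(5 w_max)) (6 ρ A / 5)^{1/3}. -/

import Mathlib

open MeasureTheory Filter Topology Real

noncomputable section

/-- The plane `ℝ²` with the Euclidean norm. -/
abbrev Plane : Type := EuclideanSpace ℝ (Fin 2)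

/-- A differential-drive (DD) trajectory with wheel-speed bound `wmax` and half-axle
length `ρ`: coordinates `x y θ` driven by measurable wheel-speed controls `wl, wr`
bounded by `wmax`, satisfying (in integral form) `x' = (wl+wr)/2 ⬝ cos θ`,
`y' = (wl+wr)/2 ⬝ sin θ`, `θ' = (wr - wl)/(2ρ)`. -/
def IsDDTraj (wmax ρ : ℝ) (x y θ : ℝ → ℝ) : Prop :=
  ∃ wl wr : ℝ → ℝ, Measurable wl ∧ Measurable wr ∧
    (∀ t, |wl t| ≤ wmax) ∧ (∀ t, |wr t| ≤ wmax) ∧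
    (∀ t, x t = x 0 + ∫ s in (0:ℝ)..t, (wl s + wr s) / 2 * Real.cos (θ s)) ∧
    (∀ t, y t = y 0 + ∫ s in (0:ℝ)..t, (wl s + wr s) / 2 * Real.sin (θ s)) ∧
    (∀ t, θ t = θ 0 + ∫ s in (0:ℝ)..t, (wr s - wl s) / (2 * ρ))

/-- Minimum travel time of a DD robot from configuration `(p, θ₀)` to the point `q`. -/
def tauDD (wmax ρ : ℝ) (p : Plane) (θ₀ : ℝ) (q : Plane) : ℝ :=
  sInf {T : ℝ | 0 ≤ T ∧ ∃ x y θ : ℝ → ℝ, IsDDTraj wmax ρ x y θ ∧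
    x 0 = p 0 ∧ y 0 = p 1 ∧ θ 0 = θ₀ ∧ x T = q 0 ∧ y T = q 1}

/-- Reachable set at time `t` of a DD robot starting at configuration `(p, θ₀)`. -/
def reachDD (wmax ρ : ℝ) (p : Plane) (θ₀ : ℝ) (t : ℝ) : Set Plane :=
  {q | tauDD wmax ρ p θ₀ q ≤ t}

/-!
In time `t` a robot moves at most `w t` forward, `w` being the wheel-speed bound, and turns by at
most `w t / ρ`; so its sideways displacement is at most `(w t)² / ρ` and the points it reaches lie
in a rectangle of area `4 (w t)³ / ρ`. At the time when `m` such rectangles can cover at most half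
of the region, half of it is still waiting, and Markov's inequality bounds the mean travel time
below by `(ρ A / m)^(1/3) / (4 w)`; finally `(6/5)^(1/3) ≤ 5/4`.

A real-valued `liminf` is meaningful only if the sequence does not tend to infinity. This is
ensured by a `k × k²` grid of parallel robots, in which each point is the distance `O(1/k)` ahead of
and `O(1/k²)` beside some robot and hence within its reach in time `O(1/k)`.
-/

/-! ### Primitives and splicing -/

section Primitive

variable {E : Type*} [NormedAddCommGroup E] [NormedSpace ℝ E] {F G f g : ℝ → E} {T : ℝ}

/-- `F` is a Carathéodory solution of `F' = f`: the control equations in `IsDDTraj` hold in this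
integral form, and integrability is recorded because the interval integral is `0` without it. -/
structure IsPrimitive (F f : ℝ → E) : Prop where
  intervalIntegrable : ∀ a b, IntervalIntegrable f volume a b
  eq_add_integral : ∀ t, F t = F 0 + ∫ s in (0 : ℝ)..t, f s

/-- The function that follows `f` up to time `T` and from then on follows `g` with its clock
restarted; it concatenates both trajectories and controls. -/
def spliceAt {α : Type*} (T : ℝ) (f g : ℝ → α) (t : ℝ) : α :=
  if t ≤ T then f t else g (t - T)

lemma spliceAt_of_le {α : Type*} {T t : ℝ} (f g : ℝ → α) (h : t ≤ T) : spliceAt T f g t = f t :=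
  if_pos h

lemma spliceAt_of_lt {α : Type*} {T t : ℝ} (f g : ℝ → α) (h : T < t) :
    spliceAt T f g t = g (t - T) :=
  if_neg h.not_ge

lemma spliceAt_add {α : Type*} {f g : ℝ → α} {T S : ℝ} (hS : 0 ≤ S) (h : g 0 = f T) :
    spliceAt T f g (T + S) = g S := by
  rcases hS.eq_or_lt with rfl | hS
  · rw [add_zero, spliceAt_of_le f g le_rfl, h]
  · rw [spliceAt_of_lt f g (lt_add_of_pos_right T hS), add_sub_cancel_left]

lemma measurable_spliceAt {α : Type*} [MeasurableSpace α] {f g : ℝ → α} (hf : Measurable f)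
    (hg : Measurable g) (T : ℝ) : Measurable (spliceAt T f g) :=
  hf.ite measurableSet_Iic (hg.comp (measurable_id.sub_const T))

namespace IsPrimitive

lemma integral_eq_sub (hF : IsPrimitive F f) (a b : ℝ) : ∫ s in a..b, f s = F b - F a := by
  rw [← intervalIntegral.integral_interval_sub_left (hF.intervalIntegrable 0 b)
    (hF.intervalIntegrable 0 a), hF.eq_add_integral b, hF.eq_add_integral a,
    add_sub_add_left_eq_sub]

lemma continuous (hF : IsPrimitive F f) : Continuous F := by
  rw [funext hF.eq_add_integral]
  exact continuous_const.add (intervalIntegral.continuous_primitive hF.intervalIntegrable 0)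

lemma norm_sub_le (hF : IsPrimitive F f) {C : ℝ} (hT : 0 ≤ T)
    (hC : ∀ s ∈ Set.Ioc 0 T, ‖f s‖ ≤ C) : ‖F T - F 0‖ ≤ C * T := by
  rw [← hF.integral_eq_sub 0 T]
  simpa only [sub_zero, abs_of_nonneg hT] using
    intervalIntegral.norm_integral_le_of_norm_le_const (a := 0) (b := T)
      (by rwa [Set.uIoc_of_le hT])

lemma add (hF : IsPrimitive F f) (hG : IsPrimitive G g) :
    IsPrimitive (fun t => F t + G t) (fun t => f t + g t) where
  intervalIntegrable a b := (hF.intervalIntegrable a b).add (hG.intervalIntegrable a b)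
  eq_add_integral t := by
    rw [intervalIntegral.integral_add (hF.intervalIntegrable 0 t) (hG.intervalIntegrable 0 t),
      hF.integral_eq_sub, hG.integral_eq_sub]
    abel

lemma const_smul (hF : IsPrimitive F f) (c : ℝ) :
    IsPrimitive (fun t => c • F t) (fun t => c • f t) where
  intervalIntegrable a b := (hF.intervalIntegrable a b).smul c
  eq_add_integral t := by
    rw [intervalIntegral.integral_smul, hF.integral_eq_sub, ← smul_add, add_sub_cancel]

lemma splice (hF : IsPrimitive F f) (hG : IsPrimitive G g) (h : G 0 = F T) :
    IsPrimitive (spliceAt T F G) (spliceAt T f g) := by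
  have from_T (t : ℝ) : IntervalIntegrable (spliceAt T f g) volume T t ∧
      ∫ s in T..t, spliceAt T f g s = spliceAt T F G t - spliceAt T F G T := by
    rw [spliceAt_of_le F G le_rfl]
    rcases le_or_gt t T with ht | ht
    · have hfg : Set.EqOn f (spliceAt T f g) (Set.uIoc T t) := fun s hs =>
        (spliceAt_of_le f g (by rw [Set.uIoc_of_ge ht] at hs; exact hs.2)).symm
      refine ⟨(hF.intervalIntegrable T t).congr hfg, ?_⟩
      rw [← intervalIntegral.integral_congr_ae (.of_forall hfg), hF.integral_eq_sub,
        spliceAt_of_le F G ht]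
    · have hfg : Set.EqOn (fun s => g (s - T)) (spliceAt T f g) (Set.uIoc T t) :=
        fun s hs => (spliceAt_of_lt f g (by rw [Set.uIoc_of_le ht.le] at hs; exact hs.1)).symm
      refine ⟨IntervalIntegrable.congr hfg ?_, ?_⟩
      · simpa using (hG.intervalIntegrable 0 (t - T)).comp_sub_right T
      · rw [← intervalIntegral.integral_congr_ae (.of_forall hfg),
          intervalIntegral.integral_comp_sub_right, hG.integral_eq_sub, sub_self, h,
          spliceAt_of_lt F G ht]
  refine ⟨fun a b => (from_T a).1.symm.trans (from_T b).1, fun t => ?_⟩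
  rw [← intervalIntegral.integral_interval_sub_left (from_T t).1 (from_T 0).1, (from_T t).2,
    (from_T 0).2]
  abel

end IsPrimitive

end Primitive

/-! ### Trajectories -/

section Trajectory

lemma abs_add_div_two_le {a b w : ℝ} (ha : |a| ≤ w) (hb : |b| ≤ w) : |(a + b) / 2| ≤ w := by
  rw [abs_le] at *
  constructor <;> linarith

lemma abs_sub_div_two_mul_le {a b w ρ : ℝ} (ha : |a| ≤ w) (hb : |b| ≤ w) :
    |(a - b) / (2 * ρ)| ≤ w / |ρ| := by
  rw [← div_div, abs_div, sub_eq_add_neg]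
  exact div_le_div_of_nonneg_right (abs_add_div_two_le ha (by rwa [abs_neg])) (abs_nonneg ρ)

lemma intervalIntegrable_of_abs_le {f : ℝ → ℝ} {C : ℝ} (hf : Measurable f)
    (hC : ∀ t, |f t| ≤ C) (a b : ℝ) : IntervalIntegrable f volume a b :=
  (intervalIntegrable_const (c := C)).mono_fun hf.aestronglyMeasurable
    (.of_forall fun t => (hC t).trans (le_abs_self C))

variable {w ρ T : ℝ} {x y θ : ℝ → ℝ}

lemma isDDTraj_iff_isPrimitive : IsDDTraj w ρ x y θ ↔
    ∃ wl wr : ℝ → ℝ, Measurable wl ∧ Measurable wr ∧ (∀ t, |wl t| ≤ w) ∧ (∀ t, |wr t| ≤ w) ∧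
      IsPrimitive x (fun t => (wl t + wr t) / 2 * cos (θ t)) ∧
      IsPrimitive y (fun t => (wl t + wr t) / 2 * sin (θ t)) ∧
      IsPrimitive θ (fun t => (wr t - wl t) / (2 * ρ)) := by
  constructor
  · rintro ⟨wl, wr, hwl, hwr, hl, hr, hx, hy, hθ⟩
    have hθ' : IsPrimitive θ (fun t => (wr t - wl t) / (2 * ρ)) :=
      ⟨intervalIntegrable_of_abs_le ((hwr.sub hwl).div_const _)
        fun t => abs_sub_div_two_mul_le (hr t) (hl t), hθ⟩
    have hθm : Measurable θ := hθ'.continuous.measurable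
    have hv : Measurable fun t => (wl t + wr t) / 2 := (hwl.add hwr).div_const 2
    have bound {t c : ℝ} (hc : |c| ≤ 1) : |(wl t + wr t) / 2 * c| ≤ w := by
      rw [abs_mul]
      exact (mul_le_of_le_one_right (abs_nonneg _) hc).trans (abs_add_div_two_le (hl t) (hr t))
    exact ⟨wl, wr, hwl, hwr, hl, hr,
      ⟨intervalIntegrable_of_abs_le (hv.mul hθm.cos) fun _ => bound (abs_cos_le_one _), hx⟩,
      ⟨intervalIntegrable_of_abs_le (hv.mul hθm.sin) fun _ => bound (abs_sin_le_one _), hy⟩, hθ'⟩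
  · rintro ⟨wl, wr, hwl, hwr, hl, hr, hx, hy, hθ⟩
    exact ⟨wl, wr, hwl, hwr, hl, hr, hx.eq_add_integral, hy.eq_add_integral, hθ.eq_add_integral⟩

lemma IsDDTraj.splice {x' y' θ' : ℝ → ℝ} (h : IsDDTraj w ρ x y θ) (h' : IsDDTraj w ρ x' y' θ')
    (hx : x' 0 = x T) (hy : y' 0 = y T) (hθ : θ' 0 = θ T) :
    IsDDTraj w ρ (spliceAt T x x') (spliceAt T y y') (spliceAt T θ θ') := by
  obtain ⟨wl, wr, hwl, hwr, hl, hr, px, py, pθ⟩ := isDDTraj_iff_isPrimitive.1 h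
  obtain ⟨wl', wr', hwl', hwr', hl', hr', px', py', pθ'⟩ := isDDTraj_iff_isPrimitive.1 h'
  have bound {u u' : ℝ → ℝ} (hu : ∀ t, |u t| ≤ w) (hu' : ∀ t, |u' t| ≤ w) (t : ℝ) :
      |spliceAt T u u' t| ≤ w := by
    unfold spliceAt
    split_ifs
    exacts [hu t, hu' _]
  refine isDDTraj_iff_isPrimitive.2 ⟨_, _, measurable_spliceAt hwl hwl' T,
    measurable_spliceAt hwr hwr' T, bound hl hl', bound hr hr', ?_, ?_, ?_⟩
  · convert px.splice px' hx using 2 with t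
    unfold spliceAt
    split_ifs <;> rfl
  · convert py.splice py' hy using 2 with t
    unfold spliceAt
    split_ifs <;> rfl
  · convert pθ.splice pθ' hθ using 2 with t
    unfold spliceAt
    split_ifs <;> rfl

lemma isDDTraj_drive (p : Plane) (θ₀ : ℝ) {c : ℝ} (hc : |c| ≤ w) :
    IsDDTraj w ρ (fun t => p 0 + c * t * cos θ₀) (fun t => p 1 + c * t * sin θ₀)
      (fun _ => θ₀) :=
  ⟨fun _ => c, fun _ => c, measurable_const, measurable_const, fun _ => hc, fun _ => hc,
    by simp [mul_assoc], by simp [mul_assoc], by simp⟩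

lemma isDDTraj_turn (p : Plane) (θ₀ : ℝ) {c : ℝ} (hc : |c| ≤ w) :
    IsDDTraj w ρ (fun _ => p 0) (fun _ => p 1) (fun t => θ₀ + c * t / ρ) :=
  ⟨fun _ => -c, fun _ => c, measurable_const, measurable_const, fun _ => by rwa [abs_neg],
    fun _ => hc, by simp, by simp,
    fun t => by rw [intervalIntegral.integral_const, smul_eq_mul]; ring⟩

end Trajectory

/-! ### Motion in the body frame -/

section BodyFrame

/-- The rotation by `-θ`: its two coordinates are the forward and the leftward component of a
displacement, as seen by a robot with heading `θ`. -/
def bodyFrame (θ : ℝ) : Plane ≃ₗᵢ[ℝ] Plane :=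
  Complex.orthonormalBasisOneI.repr.symm.trans
    ((rotation (Circle.exp θ)).symm.trans Complex.orthonormalBasisOneI.repr)

lemma bodyFrame_apply_zero (θ : ℝ) (u : Plane) :
    bodyFrame θ u 0 = cos θ * u 0 + sin θ * u 1 := by
  simp [bodyFrame, rotation_symm, -map_inv, Complex.normSq_eq_norm_sq, Complex.exp_ofReal_mul_I_re,
    Complex.exp_ofReal_mul_I_im]

lemma bodyFrame_apply_one (θ : ℝ) (u : Plane) :
    bodyFrame θ u 1 = cos θ * u 1 - sin θ * u 0 := by
  simp [bodyFrame, rotation_symm, -map_inv, Complex.normSq_eq_norm_sq, Complex.exp_ofReal_mul_I_re,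
    Complex.exp_ofReal_mul_I_im, sub_eq_add_neg]

end BodyFrame

section Reach

variable {w ρ T S : ℝ}

/-- A robot can go from configuration `g` to configuration `g'` in exactly time `T`. Prescribing
the final heading, which `tauDD` leaves free, is what allows motions to be concatenated. -/
def DDReaches (w ρ T : ℝ) (g g' : Plane × ℝ) : Prop :=
  0 ≤ T ∧ ∃ x y θ : ℝ → ℝ, IsDDTraj w ρ x y θ ∧
    (x 0 = g.1 0 ∧ y 0 = g.1 1 ∧ θ 0 = g.2) ∧ (x T = g'.1 0 ∧ y T = g'.1 1 ∧ θ T = g'.2)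

lemma tauDD_eq_sInf (p : Plane) (θ₀ : ℝ) (q : Plane) :
    tauDD w ρ p θ₀ q = sInf {T | ∃ θ₁, DDReaches w ρ T (p, θ₀) (q, θ₁)} := by
  unfold tauDD DDReaches
  congr 1 with T
  constructor
  · rintro ⟨hT, x, y, θ, h, hx₀, hy₀, hθ₀, hx, hy⟩
    exact ⟨θ T, hT, x, y, θ, h, ⟨hx₀, hy₀, hθ₀⟩, hx, hy, rfl⟩
  · rintro ⟨_, hT, x, y, θ, h, ⟨hx₀, hy₀, hθ₀⟩, hx, hy, -⟩
    exact ⟨hT, x, y, θ, h, hx₀, hy₀, hθ₀, hx, hy⟩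

lemma DDReaches.trans {g₁ g₂ g₃ : Plane × ℝ} (h : DDReaches w ρ T g₁ g₂)
    (h' : DDReaches w ρ S g₂ g₃) : DDReaches w ρ (T + S) g₁ g₃ := by
  obtain ⟨hT, x, y, θ, traj, ⟨hx₀, hy₀, hθ₀⟩, hx, hy, hθ⟩ := h
  obtain ⟨hS, x', y', θ', traj', ⟨hx₀', hy₀', hθ₀'⟩, hx', hy', hθ'⟩ := h'
  have ex := hx₀'.trans hx.symm
  have ey := hy₀'.trans hy.symm
  have eθ := hθ₀'.trans hθ.symm
  exact ⟨add_nonneg hT hS, _, _, _, traj.splice traj' ex ey eθ,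
    ⟨(spliceAt_of_le _ _ hT).trans hx₀, (spliceAt_of_le _ _ hT).trans hy₀,
      (spliceAt_of_le _ _ hT).trans hθ₀⟩,
    (spliceAt_add hS ex).trans hx', (spliceAt_add hS ey).trans hy',
    (spliceAt_add hS eθ).trans hθ'⟩

lemma abs_mul_sign_le (hw : 0 ≤ w) (d : ℝ) : |w * SignType.sign d| ≤ w := by
  rcases lt_trichotomy d 0 with h | rfl | h <;> simp [*, abs_of_nonneg]

lemma mul_sign_mul_abs_div (hw : w ≠ 0) (d : ℝ) :
    w * SignType.sign d * (|d| / w) = d := by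
  rw [mul_right_comm, mul_div_cancel₀ _ hw, abs_mul_sign]

lemma ddReaches_drive (hw : 0 < w) (p : Plane) (θ₀ d : ℝ) :
    DDReaches w ρ (|d| / w) (p, θ₀) (p + d • !₂[cos θ₀, sin θ₀], θ₀) :=
  ⟨by positivity, _, _, _, isDDTraj_drive p θ₀ (abs_mul_sign_le hw.le d), by simp,
    by simp [mul_sign_mul_abs_div hw.ne']⟩

lemma ddReaches_turn (hw : 0 < w) (hρ : 0 < ρ) (p : Plane) (θ₀ α : ℝ) :
    DDReaches w ρ (ρ * |α| / w) (p, θ₀) (p, θ₀ + α) := by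
  refine ⟨by positivity, _, _, _, isDDTraj_turn p θ₀ (abs_mul_sign_le hw.le α), by simp,
    rfl, rfl, ?_⟩
  have turned : w * SignType.sign α * (ρ * |α| / w) / ρ = w * SignType.sign α * (|α| / w) := by
    field_simp
  rw [turned, mul_sign_mul_abs_div hw.ne']

lemma DDReaches.abs_bodyFrame_zero_le {g g' : Plane × ℝ} (h : DDReaches w ρ T g g') :
    |bodyFrame g.2 (g'.1 - g.1) 0| ≤ w * T := by
  obtain ⟨hT, x, y, θ, traj, ⟨hx₀, hy₀, -⟩, hx, hy, -⟩ := h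
  obtain ⟨wl, wr, -, -, hl, hr, px, py, -⟩ := isDDTraj_iff_isPrimitive.1 traj
  have speed (t : ℝ) :
      |cos g.2 * ((wl t + wr t) / 2 * cos (θ t)) + sin g.2 * ((wl t + wr t) / 2 * sin (θ t))|
        ≤ w :=
    calc _ = |(wl t + wr t) / 2| * |cos (θ t - g.2)| := by rw [← abs_mul, cos_sub]; ring_nf
      _ ≤ |(wl t + wr t) / 2| := mul_le_of_le_one_right (abs_nonneg _) (abs_cos_le_one _)
      _ ≤ w := abs_add_div_two_le (hl t) (hr t)
  have forward := ((px.const_smul (cos g.2)).add (py.const_smul (sin g.2))).norm_sub_le hT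
    fun t _ => speed t
  rw [hx, hy, hx₀, hy₀, Real.norm_eq_abs] at forward
  simp only [smul_eq_mul] at forward
  rw [bodyFrame_apply_zero, PiLp.sub_apply, PiLp.sub_apply]
  convert forward using 2
  ring

lemma DDReaches.abs_bodyFrame_one_le {g g' : Plane × ℝ} (h : DDReaches w ρ T g g') (hρ : 0 < ρ) :
    |bodyFrame g.2 (g'.1 - g.1) 1| ≤ (w * T) ^ 2 / ρ := by
  obtain ⟨hT, x, y, θ, traj, ⟨hx₀, hy₀, hθ₀⟩, hx, hy, -⟩ := h
  obtain ⟨wl, wr, -, -, hl, hr, px, py, pθ⟩ := isDDTraj_iff_isPrimitive.1 traj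
  have hw : 0 ≤ w := (abs_nonneg _).trans (hl 0)
  have turned {t : ℝ} (ht : t ∈ Set.Ioc 0 T) : |θ t - g.2| ≤ w * T / ρ := by
    rw [← hθ₀, ← div_mul_eq_mul_div]
    refine (pθ.norm_sub_le ht.1.le fun s _ => ?_).trans
      (mul_le_mul_of_nonneg_left ht.2 (by positivity))
    have := abs_sub_div_two_mul_le (ρ := ρ) (hr s) (hl s)
    rwa [abs_of_pos hρ] at this
  have speed (t : ℝ) (ht : t ∈ Set.Ioc 0 T) :
      |-sin g.2 * ((wl t + wr t) / 2 * cos (θ t)) + cos g.2 * ((wl t + wr t) / 2 * sin (θ t))|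
        ≤ w * (w * T / ρ) :=
    calc _ = |(wl t + wr t) / 2| * |sin (θ t - g.2)| := by rw [← abs_mul, sin_sub]; ring_nf
      _ ≤ w * (w * T / ρ) := mul_le_mul (abs_add_div_two_le (hl t) (hr t))
        (abs_sin_le_abs.trans (turned ht)) (abs_nonneg _) hw
  have sideways := ((px.const_smul (-sin g.2)).add (py.const_smul (cos g.2))).norm_sub_le hT speed
  rw [hx, hy, hx₀, hy₀, Real.norm_eq_abs] at sideways
  simp only [smul_eq_mul] at sideways
  rw [bodyFrame_apply_one, PiLp.sub_apply, PiLp.sub_apply]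
  convert sideways using 2 <;> ring

/-- An upper bound for the time to reach a point with body-frame coordinates `u`: lateral
displacements cost only a square root, by `exists_ddReaches`. -/
def manoeuvreTime (w ρ : ℝ) (u : Plane) : ℝ :=
  (|u 0| + 3 * √(ρ * |u 1|) + |u 1|) / w

lemma abs_le_abs_tan {α : ℝ} (hα : |α| < π / 2) : |α| ≤ |tan α| := by
  rcases le_total 0 α with h | h
  · rw [abs_of_nonneg h] at hα ⊢
    exact (le_tan h hα).trans (le_abs_self _)
  · rw [abs_of_nonpos h] at hα ⊢
    rw [← abs_neg, ← tan_neg]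
    exact (le_tan (neg_nonneg.2 h) hα).trans (le_abs_self _)

lemma re_mul_abs_arg_le {z : ℂ} (hz : 0 < z.re) : z.re * |z.arg| ≤ |z.im| := by
  have := abs_le_abs_tan (Complex.abs_arg_lt_pi_div_two_iff.2 (.inl hz))
  rwa [Complex.tan_arg, abs_div, abs_of_pos hz, le_div_iff₀' hz] at this

lemma add_smul_add_smul_eq_of_polar (p q : Plane) (θ₀ : ℝ) {r α s : ℝ}
    (hcos : r * cos α = s) (hsin : r * sin α = bodyFrame θ₀ (q - p) 1) :
    p + (bodyFrame θ₀ (q - p) 0 - s) • !₂[cos θ₀, sin θ₀]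
      + r • !₂[cos (θ₀ + α), sin (θ₀ + α)] = q := by
  rw [bodyFrame_apply_one] at hsin
  rw [bodyFrame_apply_zero]
  simp only [PiLp.sub_apply] at hsin ⊢
  ext i
  fin_cases i
  · simp only [cos_add, Fin.zero_eta, PiLp.add_apply, PiLp.smul_apply, Matrix.cons_val_zero,
      smul_eq_mul]
    linear_combination cos θ₀ * hcos - sin θ₀ * hsin + (q 0 - p 0) * cos_sq_add_sin_sq θ₀
  · simp only [sin_add, Fin.mk_one, PiLp.add_apply, PiLp.smul_apply, Matrix.cons_val_one,
      Matrix.cons_val_fin_one, smul_eq_mul]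
    linear_combination sin θ₀ * hcos + cos θ₀ * hsin + (q 1 - p 1) * cos_sq_add_sin_sq θ₀

-- Back off until the target is the distance `s = √(ρ |u 1|)` ahead, turn towards it and drive:
-- this `s` balances the length of the detour against the cost `ρ |u 1| / s` of the turn.
lemma exists_ddReaches (hw : 0 < w) (hρ : 0 < ρ) (p : Plane) (θ₀ : ℝ) (q : Plane) :
    ∃ T θ₁, T ≤ manoeuvreTime w ρ (bodyFrame θ₀ (q - p)) ∧
      DDReaches w ρ T (p, θ₀) (q, θ₁) := by
  set u := bodyFrame θ₀ (q - p)
  set s := √(ρ * |u 1|)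
  set z : ℂ := ⟨s, u 1⟩ with hz
  have hs0 : 0 ≤ s := sqrt_nonneg _
  have hss : s * s = ρ * |u 1| := mul_self_sqrt (by positivity)
  have turn_le : ρ * |z.arg| ≤ s := by
    rcases hs0.eq_or_lt with h | h
    · have : u 1 = 0 := by simpa [← h, hρ.ne'] using hss
      simp [hz, this, ← h, show (⟨0, 0⟩ : ℂ) = 0 from rfl]
    · refine le_of_mul_le_mul_left ?_ h
      rw [hss, mul_left_comm]
      exact mul_le_mul_of_nonneg_left (re_mul_abs_arg_le (z := z) h) hρ.le
  have drive_le : ‖z‖ ≤ s + |u 1| :=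
    (Complex.norm_le_abs_re_add_abs_im z).trans_eq (by rw [abs_of_nonneg (show 0 ≤ z.re from hs0)])
  have back_le : |u 0 - s| ≤ |u 0| + s := by
    simpa only [abs_of_nonneg hs0] using abs_sub (u 0) s
  have arrival : p + (u 0 - s) • !₂[cos θ₀, sin θ₀]
      + ‖z‖ • !₂[cos (θ₀ + z.arg), sin (θ₀ + z.arg)] = q :=
    add_smul_add_smul_eq_of_polar p q θ₀ (Complex.norm_mul_cos_arg z) (Complex.norm_mul_sin_arg z)
  refine ⟨_, _, ?_, arrival ▸ ((ddReaches_drive hw p θ₀ (u 0 - s)).trans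
    (ddReaches_turn hw hρ _ θ₀ z.arg)).trans (ddReaches_drive hw _ (θ₀ + z.arg) ‖z‖)⟩
  rw [abs_norm, ← add_div, ← add_div]
  refine div_le_div_of_nonneg_right ?_ hw.le
  linarith

end Reach

/-! ### The minimum travel time -/

section TravelTime

variable {w ρ : ℝ}

lemma tauDD_nonneg (w ρ : ℝ) (p : Plane) (θ₀ : ℝ) (q : Plane) : 0 ≤ tauDD w ρ p θ₀ q :=
  Real.sInf_nonneg fun _ h => h.1

lemma DDReaches.tauDD_le {T θ₀ θ₁ : ℝ} {p q : Plane} (h : DDReaches w ρ T (p, θ₀) (q, θ₁)) :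
    tauDD w ρ p θ₀ q ≤ T := by
  rw [tauDD_eq_sInf]
  refine csInf_le ⟨0, ?_⟩ ⟨θ₁, h⟩
  rintro _ ⟨_, hT, _⟩
  exact hT

lemma tauDD_le_manoeuvreTime (hw : 0 < w) (hρ : 0 < ρ) (p : Plane) (θ₀ : ℝ) (q : Plane) :
    tauDD w ρ p θ₀ q ≤ manoeuvreTime w ρ (bodyFrame θ₀ (q - p)) :=
  have ⟨_, _, hT, h⟩ := exists_ddReaches hw hρ p θ₀ q
  h.tauDD_le.trans hT

lemma exists_ddReaches_of_tauDD_lt (hw : 0 < w) (hρ : 0 < ρ) {p q : Plane} {θ₀ t : ℝ}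
    (h : tauDD w ρ p θ₀ q < t) : ∃ T < t, ∃ θ₁, DDReaches w ρ T (p, θ₀) (q, θ₁) := by
  rw [tauDD_eq_sInf] at h
  have ⟨T, θ₁, _, h₀⟩ := exists_ddReaches hw hρ p θ₀ q
  have reachable : {T | ∃ θ₁, DDReaches w ρ T (p, θ₀) (q, θ₁)}.Nonempty := ⟨T, θ₁, h₀⟩
  have ⟨T', h', hlt⟩ := exists_lt_of_csInf_lt reachable h
  exact ⟨T', hlt, h'⟩

lemma manoeuvreTime_le_of_abs_le (hw : 0 < w) (hρ : 0 < ρ) {u : Plane} {a b : ℝ}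
    (ha : |u 0| ≤ a) (hb : |u 1| ≤ b) :
    manoeuvreTime w ρ u ≤ (a + 3 * √(ρ * b) + b) / w := by
  unfold manoeuvreTime
  gcongr

lemma tauDD_le_tauDD_add (hw : 0 < w) (hρ : 0 < ρ) (p : Plane) (θ₀ : ℝ) (q q' : Plane) :
    tauDD w ρ p θ₀ q' ≤
      tauDD w ρ p θ₀ q + (‖q' - q‖ + 3 * √(ρ * ‖q' - q‖) + ‖q' - q‖) / w := by
  refine le_of_forall_gt_imp_ge_of_dense fun t ht => ?_
  obtain ⟨T, hT, θ₁, h⟩ := exists_ddReaches_of_tauDD_lt hw hρ (lt_sub_iff_add_lt.2 ht)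
  obtain ⟨S, θ₂, hS, h'⟩ := exists_ddReaches hw hρ q θ₁ q'
  have coord (i : Fin 2) : |bodyFrame θ₁ (q' - q) i| ≤ ‖q' - q‖ :=
    (PiLp.norm_apply_le _ i).trans_eq ((bodyFrame θ₁).norm_map _)
  have := (h.trans h').tauDD_le
  have := manoeuvreTime_le_of_abs_le hw hρ (coord 0) (coord 1)
  linarith

lemma continuous_tauDD (hw : 0 < w) (hρ : 0 < ρ) (p : Plane) (θ₀ : ℝ) :
    Continuous (tauDD w ρ p θ₀) := by
  refine continuous_iff_continuousAt.2 fun q => tendsto_iff_dist_tendsto_zero.2 ?_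
  have modulus : Tendsto (fun q' => (‖q' - q‖ + 3 * √(ρ * ‖q' - q‖) + ‖q' - q‖) / w) (𝓝 q) (𝓝 0) :=
    Continuous.tendsto' (by fun_prop) _ _ (by simp)
  refine squeeze_zero (fun _ => dist_nonneg) (fun q' => ?_) modulus
  have h := tauDD_le_tauDD_add hw hρ p θ₀ q q'
  have h' := tauDD_le_tauDD_add hw hρ p θ₀ q' q
  rw [norm_sub_rev] at h'
  rw [Real.dist_eq, abs_sub_le_iff]
  constructor <;> linarith

end TravelTime

/-! ### Volume of the reachable set -/

section Volume

lemma rectangle_eq_preimage_Icc (a b c d : ℝ) :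
    {u : Plane | u 0 ∈ Set.Icc a b ∧ u 1 ∈ Set.Icc c d} =
      WithLp.ofLp ⁻¹' Set.Icc ![a, c] ![b, d] := by
  ext u
  simp [Pi.le_def, Fin.forall_fin_two, and_and_and_comm]

lemma isCompact_rectangle (a b c d : ℝ) :
    IsCompact {u : Plane | u 0 ∈ Set.Icc a b ∧ u 1 ∈ Set.Icc c d} := by
  rw [rectangle_eq_preimage_Icc]
  exact (PiLp.homeomorph 2 _).isCompact_preimage.2 isCompact_Icc

lemma volume_rectangle (a b c d : ℝ) :
    volume {u : Plane | u 0 ∈ Set.Icc a b ∧ u 1 ∈ Set.Icc c d} =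
      ENNReal.ofReal (b - a) * ENNReal.ofReal (d - c) := by
  rw [rectangle_eq_preimage_Icc, (PiLp.volume_preserving_ofLp (Fin 2)).measure_preimage
    measurableSet_Icc.nullMeasurableSet, Real.volume_Icc_pi, Fin.prod_univ_two]
  rfl

variable {w ρ : ℝ}

lemma volume_tauDD_lt_le (hw : 0 < w) (hρ : 0 < ρ) (p : Plane) (θ₀ : ℝ) {t : ℝ} (ht : 0 ≤ t) :
    volume {q | tauDD w ρ p θ₀ q < t} ≤ ENNReal.ofReal (4 * (w * t) ^ 3 / ρ) := by
  set a := w * t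
  set b := (w * t) ^ 2 / ρ
  have subset_box : {q | tauDD w ρ p θ₀ q < t} ⊆ (fun q => bodyFrame θ₀ (q - p)) ⁻¹'
      {u | u 0 ∈ Set.Icc (-a) a ∧ u 1 ∈ Set.Icc (-b) b} := by
    intro q hq
    obtain ⟨T, hT, θ₁, h⟩ := exists_ddReaches_of_tauDD_lt hw hρ hq
    have hT₀ : 0 ≤ T := h.1
    have forward_le : w * T ≤ a := mul_le_mul_of_nonneg_left hT.le hw.le
    have sideways_le : (w * T) ^ 2 / ρ ≤ b := by
      unfold b
      gcongr
    exact ⟨abs_le.1 (h.abs_bodyFrame_zero_le.trans forward_le),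
      abs_le.1 ((h.abs_bodyFrame_one_le hρ).trans sideways_le)⟩
  have preserving : MeasurePreserving fun q : Plane => bodyFrame θ₀ (q - p) :=
    (bodyFrame θ₀).measurePreserving.comp (measurePreserving_sub_right volume p)
  calc volume {q | tauDD w ρ p θ₀ q < t}
      ≤ volume {u : Plane | u 0 ∈ Set.Icc (-a) a ∧ u 1 ∈ Set.Icc (-b) b} :=
        (measure_mono subset_box).trans_eq
          (preserving.measure_preimage (isCompact_rectangle ..).measurableSet.nullMeasurableSet)
    _ = ENNReal.ofReal (4 * (w * t) ^ 3 / ρ) := by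
        rw [volume_rectangle, ← ENNReal.ofReal_mul (by linarith [show 0 ≤ a by positivity])]
        congr 1
        ring

end Volume

/-! ### Minima of nonnegative functions -/

section Infimum

variable {α ι : Type*} [MeasurableSpace α] {μ : Measure α} {f : ι → α → ℝ}

lemma integrable_iInf_of_nonneg [Countable ι] (hf : ∀ i x, 0 ≤ f i x)
    (hm : ∀ i, AEMeasurable (f i) μ) (i : ι) (hi : Integrable (f i) μ) :
    Integrable (fun x => ⨅ i, f i x) μ := by
  refine hi.mono (AEMeasurable.iInf hm).aestronglyMeasurable (.of_forall fun x => ?_)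
  rw [Real.norm_of_nonneg (Real.iInf_nonneg fun i => hf i x), Real.norm_of_nonneg (hf i x)]
  exact ciInf_le ⟨0, Set.forall_mem_range.2 fun i => hf i x⟩ i

-- Markov's inequality, with a union bound for the sublevel set of the minimum.
lemma mul_sub_card_mul_le_integral_iInf [IsFiniteMeasure μ] [Fintype ι] [Nonempty ι]
    (hf : ∀ i x, 0 ≤ f i x) (hint : Integrable (fun x => ⨅ i, f i x) μ) {t V : ℝ} (ht : 0 ≤ t)
    (hV : ∀ i, μ.real {x | f i x < t} ≤ V) :
    t * (μ.real Set.univ - Fintype.card ι * V) ≤ ∫ x, ⨅ i, f i x ∂μ := by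
  have cover : (Set.univ : Set α) ⊆ {x | t ≤ ⨅ i, f i x} ∪ ⋃ i, {x | f i x < t} := by
    intro x _
    rcases le_or_gt t (⨅ i, f i x) with h | h
    · exact .inl h
    · exact .inr (Set.mem_iUnion.2 (exists_lt_of_ciInf_lt h))
  have union_bound : μ.real (⋃ i, {x | f i x < t}) ≤ Fintype.card ι * V :=
    calc _ ≤ ∑ i, μ.real {x | f i x < t} := measureReal_iUnion_fintype_le _
      _ ≤ Fintype.card ι * V := by
        simpa using Finset.sum_le_card_nsmul Finset.univ _ V fun i _ => hV i
  have univ_le := (measureReal_mono (μ := μ) cover).trans (measureReal_union_le _ _)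
  refine le_trans (mul_le_mul_of_nonneg_left (by linarith) ht)
    (mul_meas_ge_le_integral_of_nonneg
      (.of_forall fun x => Real.iInf_nonneg fun i => hf i x) hint t)

end Infimum

/-! ### The coverage cost -/

section Coverage

variable {w ρ : ℝ} {ι : Type*} {Q : Set Plane}

/-- Time until the first of the robots parked at the configurations `g i` can be at `q`. For an
empty family, real infima being `0` there, it vanishes. -/
def coverageTime (w ρ : ℝ) (g : ι → Plane × ℝ) (q : Plane) : ℝ :=
  ⨅ i, tauDD w ρ (g i).1 (g i).2 q

/-- The optimal light-load coverage cost of the region `Q` by `m` robots. -/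
def optimalCoverageCost (w ρ : ℝ) (Q : Set Plane) (m : ℕ) : ℝ :=
  ⨅ g : Fin m → Plane × ℝ, ⨍ q in Q, coverageTime w ρ g q

lemma coverageTime_nonneg (w ρ : ℝ) (g : ι → Plane × ℝ) (q : Plane) : 0 ≤ coverageTime w ρ g q :=
  Real.iInf_nonneg fun _ => tauDD_nonneg ..

lemma coverageTime_le (w ρ : ℝ) (g : ι → Plane × ℝ) (q : Plane) (i : ι) :
    coverageTime w ρ g q ≤ tauDD w ρ (g i).1 (g i).2 q :=
  ciInf_le ⟨0, Set.forall_mem_range.2 fun _ => tauDD_nonneg ..⟩ i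

lemma integrableOn_coverageTime [Countable ι] [Nonempty ι] (hw : 0 < w) (hρ : 0 < ρ)
    (hQ : Bornology.IsBounded Q) (g : ι → Plane × ℝ) : IntegrableOn (coverageTime w ρ g) Q := by
  have hcont (i : ι) := continuous_tauDD hw hρ (g i).1 (g i).2
  let i := Classical.arbitrary ι
  exact integrable_iInf_of_nonneg (fun _ _ => tauDD_nonneg ..) (fun i => (hcont i).aemeasurable) i
    (((hcont i).continuousOn.integrableOn_compact hQ.isCompact_closure).mono_set subset_closure)

lemma mul_sub_le_setIntegral_coverageTime [Fintype ι] [Nonempty ι] (hw : 0 < w) (hρ : 0 < ρ)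
    (hQ : Bornology.IsBounded Q) (g : ι → Plane × ℝ) {t : ℝ} (ht : 0 ≤ t) :
    t * (volume.real Q - Fintype.card ι * (4 * (w * t) ^ 3 / ρ)) ≤
      ∫ q in Q, coverageTime w ρ g q := by
  have : IsFiniteMeasure (volume.restrict Q) := isFiniteMeasure_restrict.2 hQ.measure_lt_top.ne
  have reach (i : ι) : (volume.restrict Q).real {q | tauDD w ρ (g i).1 (g i).2 q < t} ≤
      4 * (w * t) ^ 3 / ρ :=
    ENNReal.toReal_le_of_le_ofReal (by positivity)
      ((Measure.restrict_apply_le _ _).trans (volume_tauDD_lt_le hw hρ _ _ ht))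
  simpa only [measureReal_restrict_apply_univ, coverageTime] using mul_sub_card_mul_le_integral_iInf
    (fun _ _ => tauDD_nonneg ..) (integrableOn_coverageTime hw hρ hQ g) ht reach

-- Markov's inequality is applied at the time when the `m` boxes can cover half of `Q`.
lemma le_optimalCoverageCost (hw : 0 < w) (hρ : 0 < ρ) (hQ : Bornology.IsBounded Q)
    (hA : 0 < volume.real Q) {m : ℕ} (hm : 0 < m) :
    1 / (4 * w) * (ρ * volume.real Q / m) ^ ((1 : ℝ) / 3) ≤ optimalCoverageCost w ρ Q m := by
  have : NeZero m := ⟨hm.ne'⟩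
  set A := volume.real Q
  set r := (ρ * A / m) ^ ((1 : ℝ) / 3) with hr
  have r_cubed : r ^ 3 = ρ * A / m := by
    rw [hr, ← Real.rpow_mul_natCast (by positivity)]
    norm_num
  refine le_ciInf fun g => ?_
  have markov : r / (2 * w) * (A - m * (4 * (w * (r / (2 * w))) ^ 3 / ρ)) ≤
      ∫ q in Q, coverageTime w ρ g q := by
    simpa only [Fintype.card_fin] using
      mul_sub_le_setIntegral_coverageTime hw hρ hQ g (t := r / (2 * w)) (by positivity)
  have half : m * (4 * (w * (r / (2 * w))) ^ 3 / ρ) = A / 2 := by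
    rw [show w * (r / (2 * w)) = r / 2 by field_simp, div_pow, r_cubed]
    field_simp
    norm_num
  rw [half] at markov
  rw [setAverage_eq, smul_eq_mul, inv_mul_eq_div, le_div_iff₀ hA]
  refine le_trans (le_of_eq ?_) markov
  ring

lemma optimalCoverageCost_le_of_forall_le {m : ℕ} {C : ℝ} (hA : 0 < volume.real Q)
    (g : Fin m → Plane × ℝ) (hg : ∀ q ∈ Q, coverageTime w ρ g q ≤ C) :
    optimalCoverageCost w ρ Q m ≤ C := by
  have average_le : ⨍ q in Q, coverageTime w ρ g q ≤ C := by
    rw [setAverage_eq, smul_eq_mul, inv_mul_le_iff₀' hA]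
    refine (le_norm_self _).trans (norm_setIntegral_le_of_norm_le_const
      (ENNReal.toReal_pos_iff.1 hA).2 fun q hq => ?_)
    rw [Real.norm_of_nonneg (coverageTime_nonneg ..)]
    exact hg q hq
  refine (ciInf_le ⟨0, Set.forall_mem_range.2 fun g => ?_⟩ g).trans average_le
  rw [setAverage_eq]
  exact smul_nonneg (by positivity) (integral_nonneg fun q => coverageTime_nonneg ..)

lemma exists_fin_abs_sub_le {u R : ℝ} (hu : |u| < R) {k : ℕ} (hk : 0 < k) :
    ∃ j : Fin k, |u - (2 * (j : ℝ) / k - 1) * R| ≤ 2 * R / k := by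
  have hR : 0 < R := (abs_nonneg u).trans_lt hu
  obtain ⟨lower, upper⟩ := abs_lt.1 hu
  set v := (u + R) / (2 * R) * k with hv
  have hv₀ : 0 ≤ v := mul_nonneg (div_nonneg (by linarith) (by linarith)) k.cast_nonneg
  have hvk : v < k :=
    mul_lt_of_lt_one_left (by positivity) ((div_lt_one (by positivity)).2 (by linarith))
  refine ⟨⟨⌊v⌋₊, (Nat.floor_lt hv₀).2 hvk⟩, ?_⟩
  have scaled : u - (2 * (⌊v⌋₊ : ℝ) / k - 1) * R = 2 * R / k * (v - ⌊v⌋₊) := by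
    rw [hv]
    field_simp
    ring
  rw [scaled, abs_mul, abs_of_pos (by positivity)]
  refine mul_le_of_le_one_right (by positivity) (abs_le.2 ?_)
  constructor <;> linarith [Nat.floor_le hv₀, Nat.lt_floor_add_one v]

-- All robots face along the first axis. The grid is `k × k²`, since in time of order `1 / k` a
-- robot moves a distance of order `1 / k` forward but only of order `1 / k²` sideways.
lemma exists_coverageTime_le_div (hw : 0 < w) (hρ : 0 < ρ) (hQ : Bornology.IsBounded Q) :
    ∃ C, ∀ k : ℕ, 0 < k → ∃ g : Fin (k * k ^ 2) → Plane × ℝ, ∀ q ∈ Q,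
      coverageTime w ρ g q ≤ C / k := by
  obtain ⟨R, hR, hQR⟩ := hQ.subset_ball_lt 0 0
  refine ⟨(2 * R + 3 * √(ρ * (2 * R)) + 2 * R) / w, fun k hk => ?_⟩
  let node (j : Fin k × Fin (k ^ 2)) : Plane :=
    !₂[(2 * (j.1 : ℝ) / k - 1) * R, (2 * (j.2 : ℝ) / (k ^ 2 : ℕ) - 1) * R]
  refine ⟨fun i => (node (finProdFinEquiv.symm i), 0), fun q hq => ?_⟩
  have coord_lt (i : Fin 2) : |q i| < R :=
    (PiLp.norm_apply_le q i).trans_lt (mem_ball_zero_iff.1 (hQR hq))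
  obtain ⟨j₀, h₀⟩ := exists_fin_abs_sub_le (coord_lt 0) hk
  obtain ⟨j₁, h₁⟩ := exists_fin_abs_sub_le (coord_lt 1) (pow_pos hk 2)
  have forward : |bodyFrame 0 (q - node (j₀, j₁)) 0| ≤ 2 * R / k := by
    simpa [bodyFrame_apply_zero, node] using h₀
  have sideways : |bodyFrame 0 (q - node (j₀, j₁)) 1| ≤ 2 * R / k ^ 2 := by
    simpa [bodyFrame_apply_one, node] using h₁
  have hk₁ : (1 : ℝ) ≤ k := by exact_mod_cast hk
  calc coverageTime w ρ (fun i => (node (finProdFinEquiv.symm i), 0)) q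
      ≤ tauDD w ρ (node (j₀, j₁)) 0 q := by
        simpa using coverageTime_le w ρ (fun i => (node (finProdFinEquiv.symm i), 0)) q
          (finProdFinEquiv (j₀, j₁))
    _ ≤ (2 * R / k + 3 * √(ρ * (2 * R / k ^ 2)) + 2 * R / k ^ 2) / w :=
        (tauDD_le_manoeuvreTime hw hρ ..).trans (manoeuvreTime_le_of_abs_le hw hρ forward sideways)
    _ ≤ (2 * R / k + 3 * (√(ρ * (2 * R)) / k) + 2 * R / k) / w := by
        rw [← mul_div_assoc ρ, Real.sqrt_div' _ (by positivity), Real.sqrt_sq (by positivity)]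
        gcongr
        exact le_self_pow₀ hk₁ two_ne_zero
    _ = (2 * R + 3 * √(ρ * (2 * R)) + 2 * R) / w / k := by ring

lemma isCoboundedUnder_rpow_mul_optimalCoverageCost (hw : 0 < w) (hρ : 0 < ρ)
    (hQ : Bornology.IsBounded Q) (hA : 0 < volume.real Q) :
    IsCoboundedUnder (· ≥ ·) atTop
      fun m : ℕ => (m : ℝ) ^ ((1 : ℝ) / 3) * optimalCoverageCost w ρ Q m := by
  obtain ⟨C, hC⟩ := exists_coverageTime_le_div hw hρ hQ
  refine IsCoboundedUnder.of_frequently_le (a := C) (frequently_atTop.2 fun N => ?_)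
  set k := N + 1
  have hk : 0 < k := N.succ_pos
  obtain ⟨g, hg⟩ := hC k hk
  have cube_root : ((k * k ^ 2 : ℕ) : ℝ) ^ ((1 : ℝ) / 3) = k := by
    rw [← pow_succ', Nat.cast_pow, one_div]
    exact Real.pow_rpow_inv_natCast k.cast_nonneg three_ne_zero
  refine ⟨k * k ^ 2, N.le_succ.trans (Nat.le_mul_of_pos_right k (pow_pos hk 2)), ?_⟩
  rw [cube_root, ← le_div_iff₀' (by positivity)]
  exact optimalCoverageCost_le_of_forall_le hA g hg

end Coverage

theorem dd_coverage_asymptotic_lower_bound_general {w ρ : ℝ} (hw : 0 < w) (hρ : 0 < ρ)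
    {Q : Set Plane} (hQ : Bornology.IsBounded Q) (hA : 0 < volume.real Q) :
    1 / (5 * w) * (6 * ρ * volume.real Q / 5) ^ ((1 : ℝ) / 3) ≤
      liminf (fun m : ℕ => (m : ℝ) ^ ((1 : ℝ) / 3) * optimalCoverageCost w ρ Q m) atTop := by
  refine le_liminf_of_le (isCoboundedUnder_rpow_mul_optimalCoverageCost hw hρ hQ hA) ?_
  filter_upwards [eventually_gt_atTop 0] with m hm
  set A := volume.real Q
  have constant_le : ((6 : ℝ) / 5) ^ ((1 : ℝ) / 3) ≤ 5 / 4 := by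
    rw [one_div, Real.rpow_inv_le_iff_of_pos] <;> norm_num
  calc 1 / (5 * w) * (6 * ρ * A / 5) ^ ((1 : ℝ) / 3)
      = 1 / (5 * w) * ((6 / 5) ^ ((1 : ℝ) / 3) * (ρ * A) ^ ((1 : ℝ) / 3)) := by
        rw [← Real.mul_rpow (by positivity) (by positivity)]
        ring_nf
    _ ≤ 1 / (5 * w) * (5 / 4 * (ρ * A) ^ ((1 : ℝ) / 3)) := by gcongr
    _ = m ^ ((1 : ℝ) / 3) * (1 / (4 * w) * (ρ * A / m) ^ ((1 : ℝ) / 3)) := by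
        rw [Real.div_rpow (by positivity) (by positivity)]
        field_simp
    _ ≤ m ^ ((1 : ℝ) / 3) * optimalCoverageCost w ρ Q m := by
        gcongr
        exact le_optimalCoverageCost hw hρ hQ hA hm

/-- asymptotic lower bound on the optimal light-load coverage cost of `m`
DD robots in a square `Q` of area `A = a²`:
`liminf_{m→∞} m^{1/3} · T_opt^DD(m) ≥ (1/(5 w_max)) (6 ρ A / 5)^{1/3}`. -/
theorem dd_coverage_asymptotic_lower_bound
    (wmax ρ a : ℝ) (hw : 0 < wmax) (hρ : 0 < ρ) (ha : 0 < a) (b₁ b₂ : ℝ) :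
    let A : ℝ := a ^ 2
    let Q : Set Plane := {q | q 0 ∈ Set.Icc b₁ (b₁ + a) ∧ q 1 ∈ Set.Icc b₂ (b₂ + a)}
    let Topt : ℕ → ℝ := fun m =>
      sInf {c : ℝ | ∃ g : Fin m → Plane × ℝ,
        c = (1 / A) * ∫ q in Q, ⨅ i, tauDD wmax ρ (g i).1 (g i).2 q}
    (1 / (5 * wmax)) * (6 * ρ * A / 5) ^ ((1 : ℝ) / 3) ≤
      Filter.liminf (fun m : ℕ => (m : ℝ) ^ ((1 : ℝ) / 3) * Topt m) Filter.atTop := by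
  intro A Q Topt
  have area : volume.real Q = A := by
    simp only [Measure.real, Q, volume_rectangle, add_sub_cancel_left, ENNReal.toReal_mul,
      ENNReal.toReal_ofReal ha.le, A, sq]
  have optimal : Topt = optimalCoverageCost wmax ρ Q := by
    ext m
    simp only [Topt, optimalCoverageCost, coverageTime, iInf, Set.range, eq_comm, setAverage_eq,
      area, one_div, smul_eq_mul]
  rw [optimal, ← area]
  exact dd_coverage_asymptotic_lower_bound_general hw hρ (isCompact_rectangle ..).isBounded
    (area ▸ pow_pos ha 2)
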